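/- Pittel–Knuth integral formula: under the uniform preference distribution (realized by X, Y uniform on ([0,1]^{M×W})², where m prefers w₁ to w₂ iff X(m,w₁) < X(m,w₂) and w prefers m₁ to m₂ iff Y(m₁,w) < Y(m₂,w)), for every matching μ : M ≃ W, the probability that μ is stable equals the iterated integral over x ∈ [0,1]^M and y ∈ [0,1]^W of the product, over all pairs (m,w) with μ(m) ≠ w, of (1 − x_m · y_w). -/

import Mathlib

open MeasureTheory

/-- Under the uniform preference model induced by `XY = (X, Y)` (smaller values preferred),
the matching `μ` is stable: no pair `(m, w)` with `X(m,w) < X(m, μ m)` and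
`Y(m,w) < Y(μ⁻¹ w, w)`. -/
def IsStable {N : ℕ} (XY : (Fin N × Fin N → ℝ) × (Fin N × Fin N → ℝ))
    (μ : Fin N ≃ Fin N) : Prop :=
  ¬ ∃ m w, XY.1 (m, w) < XY.1 (m, μ m) ∧ XY.2 (m, w) < XY.2 (μ.symm w, w)

/-- The uniform probability measure on `([0,1]^{M×W})²`. -/
noncomputable def unifBox (N : ℕ) :
    Measure ((Fin N × Fin N → ℝ) × (Fin N × Fin N → ℝ)) :=
  (Measure.pi fun _ : Fin N × Fin N => volume.restrict (Set.Icc (0:ℝ) 1)).prod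
    (Measure.pi fun _ : Fin N × Fin N => volume.restrict (Set.Icc (0:ℝ) 1))

/-!
Condition on the score `x m` that each man gives his partner and the score `y w` that each woman
gives hers. The scores of the unmatched pairs are independent of these and of each other, and such a
pair `(m, w)` blocks with probability `P(X(m,w) < x m) · P(Y(m,w) < y w)`; hence stability has
conditional probability `∏ (1 - P(X(m,w) < x m) · P(Y(m,w) < y w))`. For uniform scores on the unit
interval the factors are `1 - x m * y w`.
-/

open Set ProbabilityTheory

section Measure

variable {ι κ τ : Type*} [Fintype ι] [Fintype κ] [Fintype τ]
  {E : ι → Type*} [∀ i, MeasurableSpace (E i)]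
  {α β : Type*} [MeasurableSpace α] [MeasurableSpace β]

theorem measurePreserving_pi_precomp (P : ∀ i, Measure (E i)) [∀ i, IsProbabilityMeasure (P i)]
    {f : κ → ι} (hf : f.Injective) :
    MeasurePreserving (fun (X : ∀ i, E i) k ↦ X (f k)) (Measure.pi P)
      (Measure.pi fun k ↦ P (f k)) := by
  have hindep : iIndepFun (fun i (X : ∀ i, E i) ↦ X i) (Measure.pi P) :=
    iIndepFun_pi (X := fun _ ↦ id) fun _ ↦ aemeasurable_id
  refine ⟨by fun_prop, ?_⟩
  rw [(iIndepFun_iff_map_fun_eq_pi_map fun _ ↦ (measurable_pi_apply _).aemeasurable).1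
    (hindep.precomp hf)]
  simp only [(measurePreserving_eval P _).map_eq]

theorem measurePreserving_pi_precomp_prodMk (P : ∀ i, Measure (E i))
    [∀ i, IsProbabilityMeasure (P i)] {f : κ → ι} {g : τ → ι} (h : (Sum.elim f g).Injective) :
    MeasurePreserving (fun X : ∀ i, E i ↦ (fun k ↦ X (f k), fun j ↦ X (g j))) (Measure.pi P)
      ((Measure.pi fun k ↦ P (f k)).prod (Measure.pi fun j ↦ P (g j))) :=
  (measurePreserving_sumPiEquivProdPi fun i ↦ P (Sum.elim f g i)).comp
    (measurePreserving_pi_precomp P h)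

theorem integral_measureReal_prodMk_left (P : Measure α) (Q : Measure β)
    [IsFiniteMeasure Q] {s : Set (α × β)} (hs : MeasurableSet s) :
    ∫ a, Q.real (Prod.mk a ⁻¹' s) ∂P = (P.prod Q).real s := by
  rw [Measure.real, Measure.prod_apply hs]
  exact integral_toReal (measurable_measure_prodMk_left hs).aemeasurable
    (.of_forall fun _ ↦ measure_lt_top _ _)

theorem measureReal_prod_compl_prod (P : Measure α) (Q : Measure β) [IsProbabilityMeasure P]
    [IsProbabilityMeasure Q] {s : Set α} {t : Set β} (hs : MeasurableSet s)
    (ht : MeasurableSet t) : (P.prod Q).real (s ×ˢ t)ᶜ = 1 - P.real s * Q.real t := by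
  rw [probReal_compl_eq_one_sub (hs.prod ht), measureReal_prod_prod]

theorem measureReal_restrict_Icc_Iio {a b x : ℝ} (hx : x ∈ Icc a b) :
    (volume.restrict (Icc a b)).real (Iio x) = x - a := by
  have hinter : Iio x ∩ Icc a b = Ico a x := by grind
  rw [measureReal_restrict_apply measurableSet_Iio, hinter, Real.volume_real_Ico_of_le hx.1]

instance isProbabilityMeasure_restrict_Icc_zero_one :
    IsProbabilityMeasure (volume.restrict (Icc (0 : ℝ) 1)) :=
  ⟨by simp⟩

theorem integral_prod_one_sub_restrict_Icc_zero_one (s : Finset (ι × κ)) :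
    ∫ x : ι → ℝ, ∫ y : κ → ℝ,
        ∏ p ∈ s, (1 - (volume.restrict (Icc (0 : ℝ) 1)).real (Iio (x p.1)) *
          (volume.restrict (Icc (0 : ℝ) 1)).real (Iio (y p.2)))
        ∂Measure.pi (fun _ ↦ volume.restrict (Icc 0 1))
        ∂Measure.pi (fun _ ↦ volume.restrict (Icc 0 1)) =
      ∫ x in univ.pi fun _ : ι ↦ Icc (0 : ℝ) 1, ∫ y in univ.pi fun _ : κ ↦ Icc (0 : ℝ) 1,
        ∏ p ∈ s, (1 - x p.1 * y p.2) := by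
  simp only [← Measure.restrict_pi_pi, ← volume_pi]
  refine setIntegral_congr_fun (.univ_pi fun _ ↦ measurableSet_Icc) fun x hx ↦
    setIntegral_congr_fun (.univ_pi fun _ ↦ measurableSet_Icc) fun y hy ↦ ?_
  refine Finset.prod_congr rfl fun p _ ↦ ?_
  rw [measureReal_restrict_Icc_Iio (hx p.1 trivial), measureReal_restrict_Icc_Iio (hy p.2 trivial),
    sub_zero, sub_zero]

end Measure

section StableMatching

variable {M W α β : Type*}

/-- The matching `μ` is stable when the man `m` gives the woman `w` the score `X (m, w)`, the woman
`w` gives the man `m` the score `Y (m, w)`, and smaller scores are preferred. Ties never block, and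
men and women may score on different scales. -/
def IsStableMatching [LT α] [LT β] (X : M × W → α) (Y : M × W → β) (μ : M ≃ W) : Prop :=
  ¬ ∃ m w, X (m, w) < X (m, μ m) ∧ Y (m, w) < Y (μ.symm w, w)

/-- The pairs not matched by `μ`, which are the only candidates for blocking it. -/
abbrev UnmatchedPair (μ : M ≃ W) : Type _ := {mw : M × W // μ mw.1 ≠ mw.2}

/-- Stability of `μ` in the coordinates `((x, y), Z)`, where `x m` and `y w` are the scores given to
the partners under `μ` and `Z` holds both scores of each unmatched pair. -/
def stableRegion [LT α] [LT β] (μ : M ≃ W) :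
    Set (((M → α) × (W → β)) × (UnmatchedPair μ → α × β)) :=
  {p | ∀ u, ¬ ((p.2 u).1 < p.1.1 u.1.1 ∧ (p.2 u).2 < p.1.2 u.1.2)}

/-- The change of coordinates under which `stableRegion` describes stability. -/
def splitScores (μ : M ≃ W) (XY : (M × W → α) × (M × W → β)) :
    ((M → α) × (W → β)) × (UnmatchedPair μ → α × β) :=
  ((fun m ↦ XY.1 (m, μ m), fun w ↦ XY.2 (μ.symm w, w)), fun u ↦ (XY.1 u, XY.2 u))

theorem splitScores_mem_stableRegion_iff [Preorder α] [LT β] {μ : M ≃ W}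
    {XY : (M × W → α) × (M × W → β)} :
    splitScores μ XY ∈ stableRegion μ ↔ IsStableMatching XY.1 XY.2 μ := by
  refine ⟨?_, fun h u hu ↦ h ⟨_, _, hu⟩⟩
  rintro h ⟨m, w, hblock⟩
  have hne : μ m ≠ w := fun hw ↦ lt_irrefl _ (hw ▸ hblock.1)
  exact h ⟨(m, w), hne⟩ hblock

variable [MeasurableSpace α] [MeasurableSpace β]

theorem measurePreserving_splitScores [Fintype M] [Fintype W] [DecidableEq W] (μ : M ≃ W)
    (P : M × W → Measure α) (Q : M × W → Measure β) [∀ mw, IsProbabilityMeasure (P mw)]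
    [∀ mw, IsProbabilityMeasure (Q mw)] :
    MeasurePreserving (splitScores μ) ((Measure.pi P).prod (Measure.pi Q))
      (((Measure.pi fun m ↦ P (m, μ m)).prod (Measure.pi fun w ↦ Q (μ.symm w, w))).prod
        (Measure.pi fun u : UnmatchedPair μ ↦ (P u).prod (Q u))) := by
  have hinj : (Sum.elim (fun m ↦ (m, μ m)) (Subtype.val : UnmatchedPair μ → M × W)).Injective :=
    .sumElim (fun _ _ h ↦ congrArg Prod.fst h) Subtype.val_injective
      fun m u h ↦ u.2 (by rw [← h])
  have hpair := (measurePreserving_arrowProdEquivProdArrow α β (M × W) P Q).symm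
  have hsplit := measurePreserving_pi_precomp_prodMk (fun mw ↦ (P mw).prod (Q mw)) hinj
  have hunpair := measurePreserving_arrowProdEquivProdArrow α β M
    (fun m ↦ P (m, μ m)) (fun m ↦ Q (m, μ m))
  have hreindex : MeasurePreserving (fun (y : M → β) w ↦ y (μ.symm w))
      (Measure.pi fun m ↦ Q (m, μ m)) (Measure.pi fun w ↦ Q (μ.symm w, w)) := by
    simpa only [Equiv.apply_symm_apply] using
      measurePreserving_pi_precomp (fun m ↦ Q (m, μ m)) μ.symm.injective
  convert (((MeasurePreserving.id _).prod hreindex).comp hunpair).prod (.id _) |>.comp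
    (hsplit.comp hpair) using 1
  ext XY <;>
    simp [splitScores, MeasurableEquiv.arrowProdEquivProdArrow, Equiv.arrowProdEquivProdArrow]

variable [LinearOrder α] [TopologicalSpace α] [OrderClosedTopology α] [OpensMeasurableSpace α]
  [LinearOrder β] [TopologicalSpace β] [OrderClosedTopology β] [OpensMeasurableSpace β]

theorem measurableSet_stableRegion [Finite M] [Finite W] [SecondCountableTopology α]
    [SecondCountableTopology β] (μ : M ≃ W) :
    MeasurableSet (stableRegion μ : Set (((M → α) × (W → β)) × (UnmatchedPair μ → α × β))) := by
  unfold stableRegion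
  measurability

theorem measureReal_pi_preimage_stableRegion [Fintype M] [Fintype W] [DecidableEq W] (μ : M ≃ W)
    (P : M × W → Measure α) (Q : M × W → Measure β) [∀ mw, IsProbabilityMeasure (P mw)]
    [∀ mw, IsProbabilityMeasure (Q mw)] (x : M → α) (y : W → β) :
    (Measure.pi fun u : UnmatchedPair μ ↦ (P u).prod (Q u)).real
        (Prod.mk (x, y) ⁻¹' stableRegion μ) =
      ∏ mw with μ mw.1 ≠ mw.2, (1 - (P mw).real (Iio (x mw.1)) * (Q mw).real (Iio (y mw.2))) := by
  have hpi : Prod.mk (x, y) ⁻¹' stableRegion μ =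
      univ.pi fun u : UnmatchedPair μ ↦ (Iio (x u.1.1) ×ˢ Iio (y u.1.2))ᶜ := by
    ext Z
    simp [stableRegion]
  calc
    _ = ∏ u : UnmatchedPair μ, ((P u).prod (Q u)).real (Iio (x u.1.1) ×ˢ Iio (y u.1.2))ᶜ := by
      rw [hpi, measureReal_def, Measure.pi_pi, ENNReal.toReal_prod]
      rfl
    _ = ∏ u : UnmatchedPair μ,
          (1 - (P u).real (Iio (x u.1.1)) * (Q u).real (Iio (y u.1.2))) :=
      Finset.prod_congr rfl fun u _ ↦
        measureReal_prod_compl_prod (P u) (Q u) measurableSet_Iio measurableSet_Iio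
    _ = _ := by
      rw [Finset.prod_subtype _ fun _ ↦ Finset.mem_filter_univ _]

theorem prob_stable_eq_integral_general [Fintype M] [Fintype W] [DecidableEq W]
    [SecondCountableTopology α] [SecondCountableTopology β] (μ : M ≃ W)
    (P : M × W → Measure α) (Q : M × W → Measure β) [∀ mw, IsProbabilityMeasure (P mw)]
    [∀ mw, IsProbabilityMeasure (Q mw)] :
    ((Measure.pi P).prod (Measure.pi Q)).real {XY | IsStableMatching XY.1 XY.2 μ} =
      ∫ x, ∫ y, ∏ mw with μ mw.1 ≠ mw.2,
          (1 - (P mw).real (Iio (x mw.1)) * (Q mw).real (Iio (y mw.2)))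
        ∂(Measure.pi fun w ↦ Q (μ.symm w, w)) ∂(Measure.pi fun m ↦ P (m, μ m)) := by
  have hmeas : MeasurableSet (stableRegion (α := α) (β := β) μ) := measurableSet_stableRegion μ
  have hpre : {XY : (M × W → α) × (M × W → β) | IsStableMatching XY.1 XY.2 μ} =
      splitScores μ ⁻¹' stableRegion μ :=
    Set.ext fun _ ↦ splitScores_mem_stableRegion_iff.symm
  rw [hpre, measureReal_def,
    (measurePreserving_splitScores μ P Q).measure_preimage hmeas.nullMeasurableSet,
    ← measureReal_def, ← integral_measureReal_prodMk_left _ _ hmeas,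
    integral_prod _ (Measure.integrable_measure_prodMk_left hmeas (measure_ne_top _ _))]
  simp only [measureReal_pi_preimage_stableRegion]

end StableMatching

/-- Knuth–Pittel integral formula: under the uniform preference distribution, the probability
that a fixed matching `μ` is stable equals
`∫_{[0,1]^M} ∫_{[0,1]^W} ∏_{(m,w) : μ m ≠ w} (1 - x_m y_w)`. -/
theorem prob_stable_eq_integral (N : ℕ) (hN : 1 ≤ N) (μ : Fin N ≃ Fin N) :
    (unifBox N {XY | IsStable XY μ}).toReal =
      ∫ x in Set.univ.pi fun _ : Fin N => Set.Icc (0:ℝ) 1,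
        ∫ y in Set.univ.pi fun _ : Fin N => Set.Icc (0:ℝ) 1,
          ∏ mw ∈ Finset.univ.filter fun mw : Fin N × Fin N => μ mw.1 ≠ mw.2,
            (1 - x mw.1 * y mw.2) :=
  (prob_stable_eq_integral_general μ _ _).trans
    (integral_prod_one_sub_restrict_Icc_zero_one _)
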